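/- Let L = sl₂(F_q) with q odd. In the comaximal graph Γ(L), every Borel subalgebra has degree q² + q, every nilpotent line has degree q² + q, every split semisimple line has degree q² − 1, and every nonsplit semisimple line has degree (q+1)². Consequently Γ(L) has order (q+1)² + 1 and size q(q+1)³/2. -/

import Mathlib

open Module

/-- The degree of a vertex `A` in the comaximal graph of `L`: the number of
nontrivial proper subalgebras `B ≠ A` with `⟨A,B⟩ = L`. -/
noncomputable def comaximalDegree (F : Type*) [Field F] (L : Type*) [LieRing L]
    [LieAlgebra F L] (A : LieSubalgebra F L) : ℕ :=
  Nat.card {B : LieSubalgebra F L // (B ≠ ⊥ ∧ B ≠ ⊤) ∧ B ≠ A ∧ A ⊔ B = ⊤}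

/-!
The map `(A, B) ↦ ⟨A, B⟩` sends pairs of distinct nonadjacent vertices to two-dimensional
subalgebras, and every pair of distinct vertices inside a two-dimensional subalgebra `W` is sent to
`W`. Since `W` contains `q + 2` vertices, both the nonneighbours of a vertex and the nonadjacent
pairs are counted by counting two-dimensional subalgebras.

Writing `v = a • x + b • y + c • h` as the matrix `[[c, a], [b, -c]]`, the two-dimensional
subalgebras of `sl₂` are the stabilizers of the points of the projective line. A line spanned by `v`
therefore lies in as many of them as `v` has eigenlines, that is, as `c² + ab` has square roots.
-/

open scoped LinearAlgebra.Projectivization OnePoint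

section Counting

theorem ncard_eq_ncard_mul_of_fiber {α β : Type*} {s : Set α} {t : Set β} {f : α → β} {n : ℕ}
    (hs : s.Finite) (ht : t.Finite) (hf : Set.MapsTo f s t)
    (hn : ∀ b ∈ t, {a ∈ s | f a = b}.ncard = n) : s.ncard = t.ncard * n := by
  classical
  lift s to Finset α using hs
  lift t to Finset β using ht
  rw [Set.ncard_coe_finset, Set.ncard_coe_finset, Finset.card_eq_sum_card_fiberwise hf]
  refine Finset.sum_const_nat fun b hb ↦ ?_
  rw [← hn b hb, ← Set.ncard_coe_finset, Finset.coe_filter]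
  rfl

theorem ncard_offDiag_add {α : Type*} {s : Set α} (hs : s.Finite) :
    s.offDiag.ncard + s.ncard = s.ncard ^ 2 := by
  classical
  lift s to Finset α using hs
  rw [← Finset.coe_offDiag, Set.ncard_coe_finset, Set.ncard_coe_finset, Finset.offDiag_card, sq]
  exact Nat.sub_add_cancel (Nat.le_mul_self _)

theorem ncard_sqrts {F : Type*} [Field F] [Fintype F] [DecidableEq F] (hF : ringChar F ≠ 2)
    (a : F) : ({s | s ^ 2 = a}.ncard : ℤ) = quadraticChar F a + 1 := by
  rw [Set.ncard_eq_toFinset_card', quadraticChar_card_sqrts hF]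

end Counting

section LinearAlgebra

variable {F V : Type*} [Field F] [AddCommGroup V] [Module F V]

theorem ncard_submodule_finrank_eq_one_le (W : Submodule F V) :
    {H : Submodule F V | finrank F H = 1 ∧ H ≤ W}.ncard = Nat.card (ℙ F W) := by
  have finrank_map (H : Submodule F W) : finrank F (H.map W.subtype) = finrank F H :=
    (Submodule.equivMapOfInjective W.subtype W.subtype_injective H).finrank_eq.symm
  have himage : {H : Submodule F V | finrank F H = 1 ∧ H ≤ W} =
      Submodule.map W.subtype '' {H | finrank F H = 1} := by
    ext H
    constructor
    · rintro ⟨hH, hHW⟩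
      have hmap : (H.comap W.subtype).map W.subtype = H := by
        rw [Submodule.map_comap_subtype, inf_eq_right.2 hHW]
      exact ⟨H.comap W.subtype, by rw [Set.mem_ofPred_eq, ← finrank_map, hmap, hH], hmap⟩
    · rintro ⟨H, hH, rfl⟩
      exact ⟨(finrank_map H).trans hH, W.map_subtype_le H⟩
  rw [himage, Set.ncard_image_of_injective _
    (Submodule.map_injective_of_injective W.subtype_injective),
    Nat.card_congr (Projectivization.equivSubmodule F W)]
  rfl

theorem exists_dual_ker_eq [FiniteDimensional F V] {W : Submodule F V}
    (hW : finrank F W + 1 = finrank F V) : ∃ f : Dual F V, f ≠ 0 ∧ LinearMap.ker f = W := by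
  have hlt : W < ⊤ := by
    refine lt_top_iff_ne_top.2 fun h ↦ ?_
    rw [h, finrank_top] at hW
    omega
  obtain ⟨f, hf, hWf⟩ := W.exists_le_ker_of_lt_top hlt
  refine ⟨f, hf, (Submodule.eq_of_le_of_finrank_eq hWf ?_).symm⟩
  have := Dual.finrank_ker_add_one_of_ne_zero hf
  omega

end LinearAlgebra

section Comaximal

variable {F L : Type*} [Field F] [LieRing L] [LieAlgebra F L]

/-- A line of a Lie algebra, as a subalgebra. -/
def lineSubalgebra (H : Submodule F L) (hH : finrank F H = 1) : LieSubalgebra F L :=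
  { H with
    lie_mem' := by
      obtain ⟨v, -, hv⟩ := finrank_eq_one_iff'.1 hH
      intro u w hu hw
      obtain ⟨r, hr⟩ := hv ⟨u, hu⟩
      obtain ⟨s, hs⟩ := hv ⟨w, hw⟩
      have hur : u = r • (v : L) := congrArg Subtype.val hr.symm
      have hws : w = s • (v : L) := congrArg Subtype.val hs.symm
      have huw : ⁅u, w⁆ = 0 := by
        rw [hur, hws, smul_lie, lie_smul, lie_self, smul_zero, smul_zero]
      rw [huw]
      exact H.zero_mem }

variable (F L) in
/-- The vertices of the comaximal graph of `L`: the nontrivial proper subalgebras. -/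
def comaximalVertices : Set (LieSubalgebra F L) := {A | A ≠ ⊥ ∧ A ≠ ⊤}

variable (F L) in
/-- The two-dimensional subalgebras of `L`; for `sl₂` these are the Borel subalgebras. -/
def planeSubalgebras : Set (LieSubalgebra F L) := {W | finrank F W = 2}

theorem ncard_lineSubalgebras_le (W : LieSubalgebra F L) :
    {A : LieSubalgebra F L | finrank F A = 1 ∧ A ≤ W}.ncard = Nat.card (ℙ F W) := by
  rw [← Set.ncard_image_of_injective _ LieSubalgebra.toSubmodule_injective]
  refine Eq.trans (congrArg Set.ncard ?_) (ncard_submodule_finrank_eq_one_le W.toSubmodule)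
  ext H
  constructor
  · rintro ⟨A, hA, rfl⟩
    exact hA
  · rintro ⟨hH, hHW⟩
    exact ⟨lineSubalgebra H hH, ⟨hH, hHW⟩, rfl⟩

variable [FiniteDimensional F L]

theorem strictMono_finrank_lieSubalgebra :
    StrictMono fun A : LieSubalgebra F L ↦ finrank F A :=
  fun A B h ↦ Submodule.finrank_lt_finrank_of_lt (s := A.toSubmodule) (t := B.toSubmodule) h

theorem one_le_finrank_iff_ne_bot {A : LieSubalgebra F L} : 1 ≤ finrank F A ↔ A ≠ ⊥ := by
  rw [ne_eq, ← LieSubalgebra.toSubmodule_inj, LieSubalgebra.bot_toSubmodule]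
  exact Submodule.one_le_finrank_iff

theorem two_le_finrank_sup {A B : LieSubalgebra F L} (hA : A ≠ ⊥) (hB : B ≠ ⊥) (hAB : A ≠ B) :
    2 ≤ finrank F (A ⊔ B : LieSubalgebra F L) := by
  wlog h : ¬ B ≤ A generalizing A B
  · rw [sup_comm]
    exact this hB hA hAB.symm fun hle ↦ hAB (le_antisymm hle (not_not.1 h))
  have hlt : finrank F A < finrank F (A ⊔ B : LieSubalgebra F L) :=
    strictMono_finrank_lieSubalgebra (left_lt_sup.2 h)
  have := one_le_finrank_iff_ne_bot.2 hA
  omega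

theorem sup_eq_of_mem_planeSubalgebras {A B W : LieSubalgebra F L} (hA : A ≠ ⊥) (hB : B ≠ ⊥)
    (hAB : A ≠ B) (hW : W ∈ planeSubalgebras F L) (hAW : A ≤ W) (hBW : B ≤ W) : A ⊔ B = W := by
  refine (sup_le hAW hBW).eq_of_not_lt fun hlt ↦ ?_
  have hrank : finrank F (A ⊔ B : LieSubalgebra F L) < finrank F W :=
    strictMono_finrank_lieSubalgebra hlt
  exact absurd (two_le_finrank_sup hA hB hAB) (not_le.2 (hrank.trans_eq hW))

section DimensionThree

variable (hL : finrank F L = 3)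

include hL

theorem finrank_lt_three_iff_ne_top {A : LieSubalgebra F L} : finrank F A < 3 ↔ A ≠ ⊤ := by
  constructor
  · rintro h rfl
    exact absurd (finrank_top F L) (hL ▸ h.ne)
  · intro h
    have hlt : finrank F A < finrank F (⊤ : LieSubalgebra F L) :=
      strictMono_finrank_lieSubalgebra h.lt_top
    exact hlt.trans_eq ((finrank_top F L).trans hL)

theorem mem_comaximalVertices_iff {A : LieSubalgebra F L} :
    A ∈ comaximalVertices F L ↔ finrank F A = 1 ∨ finrank F A = 2 := by
  change A ≠ ⊥ ∧ A ≠ ⊤ ↔ _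
  rw [← one_le_finrank_iff_ne_bot, ← finrank_lt_three_iff_ne_top hL]
  omega

theorem sup_ne_top_iff {A B : LieSubalgebra F L} (hA : A ∈ comaximalVertices F L)
    (hB : B ∈ comaximalVertices F L) (hAB : A ≠ B) :
    A ⊔ B ≠ ⊤ ↔ A ⊔ B ∈ planeSubalgebras F L := by
  have := two_le_finrank_sup hA.1 hB.1 hAB
  change _ ↔ finrank F (A ⊔ B : LieSubalgebra F L) = 2
  rw [← finrank_lt_three_iff_ne_top hL]
  omega

theorem sup_eq_iff_of_mem_planeSubalgebras {A B W : LieSubalgebra F L}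
    (hA : A ∈ comaximalVertices F L) (hB : B ∈ comaximalVertices F L) (hAB : A ≠ B)
    (hW : W ∈ planeSubalgebras F L) : A ⊔ B ≠ ⊤ ∧ A ⊔ B = W ↔ A ≤ W ∧ B ≤ W := by
  rw [sup_ne_top_iff hL hA hB hAB]
  constructor
  · rintro ⟨-, rfl⟩
    exact ⟨le_sup_left, le_sup_right⟩
  · rintro ⟨hAW, hBW⟩
    have h := sup_eq_of_mem_planeSubalgebras hA.1 hB.1 hAB hW hAW hBW
    exact ⟨h ▸ hW, h⟩

variable [Finite F]

theorem ncard_comaximalVertices :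
    (comaximalVertices F L).ncard =
      Nat.card F ^ 2 + Nat.card F + 1 + (planeSubalgebras F L).ncard := by
  have : Finite L := Module.finite_of_finite F
  have hunion : comaximalVertices F L =
      {A : LieSubalgebra F L | finrank F A = 1 ∧ A ≤ ⊤} ∪ planeSubalgebras F L := by
    ext A
    rw [mem_comaximalVertices_iff hL]
    simp [planeSubalgebras]
  have hdisj : Disjoint {A : LieSubalgebra F L | finrank F A = 1 ∧ A ≤ ⊤}
      (planeSubalgebras F L) :=
    Set.disjoint_left.2 fun A hA hA' ↦ absurd (hA.1.symm.trans hA') (by decide)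
  have hcard : Nat.card (ℙ F (⊤ : LieSubalgebra F L)) = ∑ i ∈ Finset.range 3, Nat.card F ^ i :=
    Projectivization.card_of_finrank F _ ((finrank_top F L).trans hL)
  rw [hunion, Set.ncard_union_eq hdisj, ncard_lineSubalgebras_le, hcard]
  simp only [Finset.sum_range_succ, Finset.sum_range_zero]
  ring

theorem ncard_comaximalVertices_le {W : LieSubalgebra F L} (hW : W ∈ planeSubalgebras F L) :
    {B ∈ comaximalVertices F L | B ≤ W}.ncard = Nat.card F + 2 := by
  have : Finite L := Module.finite_of_finite F
  have hinsert : {B ∈ comaximalVertices F L | B ≤ W} =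
      insert W {A : LieSubalgebra F L | finrank F A = 1 ∧ A ≤ W} := by
    ext B
    change B ∈ comaximalVertices F L ∧ B ≤ W ↔ B = W ∨ finrank F B = 1 ∧ B ≤ W
    rw [mem_comaximalVertices_iff hL]
    constructor
    · rintro ⟨hB | hB, hle⟩
      · exact Or.inr ⟨hB, hle⟩
      · exact Or.inl (hle.eq_of_not_lt fun hlt ↦
          (strictMono_finrank_lieSubalgebra hlt).ne (hB.trans hW.symm))
    · rintro (rfl | ⟨hB, hle⟩)
      · exact ⟨Or.inr hW, le_rfl⟩
      · exact ⟨Or.inl hB, hle⟩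
  have hnotMem : W ∉ {A : LieSubalgebra F L | finrank F A = 1 ∧ A ≤ W} :=
    fun h ↦ absurd (h.1.symm.trans hW) (by decide)
  rw [hinsert, Set.ncard_insert_of_notMem hnotMem, ncard_lineSubalgebras_le,
    Projectivization.card_of_finrank_two F _ hW]

/-- `B ↦ ⟨A, B⟩` maps the nonneighbours `B ≠ A` of `A` onto the planes through `A`; its fibre over
`W` consists of the vertices below `W` other than `A`. -/
theorem comaximalDegree_add {A : LieSubalgebra F L} (hA : A ∈ comaximalVertices F L) :
    comaximalDegree F L A + {W ∈ planeSubalgebras F L | A ≤ W}.ncard * (Nat.card F + 1) + 1 =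
      (comaximalVertices F L).ncard := by
  have : Finite L := Module.finite_of_finite F
  have hdeg : comaximalDegree F L A =
      ((comaximalVertices F L \ {A}) ∩ {B | A ⊔ B = ⊤}).ncard :=
    congrArg Set.ncard (Set.ext fun B ↦ and_assoc.symm)
  have hnon : ((comaximalVertices F L \ {A}) \ {B | A ⊔ B = ⊤}).ncard =
      {W ∈ planeSubalgebras F L | A ≤ W}.ncard * (Nat.card F + 1) := by
    refine ncard_eq_ncard_mul_of_fiber (f := (A ⊔ ·)) (Set.toFinite _) (Set.toFinite _) ?_ ?_
    · exact fun B ⟨⟨hB, hBA⟩, hsup⟩ ↦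
        ⟨(sup_ne_top_iff hL hA hB (Ne.symm hBA)).1 hsup, le_sup_left⟩
    · rintro W ⟨hW, hAW⟩
      have hfiber : {B ∈ (comaximalVertices F L \ {A}) \ {B | A ⊔ B = ⊤} | A ⊔ B = W} =
          {B ∈ comaximalVertices F L | B ≤ W} \ {A} := by
        ext B
        constructor
        · rintro ⟨⟨⟨hB, hBA⟩, _⟩, hBW⟩
          exact ⟨⟨hB, hBW ▸ le_sup_right⟩, hBA⟩
        · rintro ⟨⟨hB, hBW⟩, hBA⟩
          have h := (sup_eq_iff_of_mem_planeSubalgebras hL hA hB (Ne.symm hBA) hW).2 ⟨hAW, hBW⟩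
          exact ⟨⟨⟨hB, hBA⟩, h.1⟩, h.2⟩
      have hmem : A ∈ {B ∈ comaximalVertices F L | B ≤ W} := ⟨hA, hAW⟩
      rw [hfiber, Set.ncard_sdiff_singleton_of_mem hmem, ncard_comaximalVertices_le hL hW]
      rfl
  rw [hdeg, ← hnon, Set.ncard_inter_add_ncard_sdiff_eq_ncard,
    Set.ncard_sdiff_singleton_add_one hA]

theorem comaximalDegree_add_of_mem_planeSubalgebras {W : LieSubalgebra F L}
    (hW : W ∈ planeSubalgebras F L) :
    comaximalDegree F L W + Nat.card F + 2 = (comaximalVertices F L).ncard := by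
  have hsingle : {W' ∈ planeSubalgebras F L | W ≤ W'} = {W} := by
    refine Set.eq_singleton_iff_unique_mem.2 ⟨⟨hW, le_rfl⟩, fun W' hW' ↦ ?_⟩
    exact (hW'.2.eq_of_not_lt fun hlt ↦
      (strictMono_finrank_lieSubalgebra hlt).ne (hW.trans hW'.1.symm)).symm
  have h := comaximalDegree_add hL ((mem_comaximalVertices_iff hL).2 (Or.inr hW))
  rw [hsingle, Set.ncard_singleton] at h
  omega

/-- The ordered pairs of distinct nonadjacent vertices are the disjoint union, over the planes `W`,
of the ordered pairs of distinct vertices below `W`. -/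
theorem ncard_comaximalPairs_add :
    {p : LieSubalgebra F L × LieSubalgebra F L | p.1 ∈ comaximalVertices F L ∧
        p.2 ∈ comaximalVertices F L ∧ p.1 ≠ p.2 ∧ p.1 ⊔ p.2 = ⊤}.ncard +
      (planeSubalgebras F L).ncard * ((Nat.card F + 2) * (Nat.card F + 1)) +
      (comaximalVertices F L).ncard = (comaximalVertices F L).ncard ^ 2 := by
  have : Finite L := Module.finite_of_finite F
  have hadj : {p : LieSubalgebra F L × LieSubalgebra F L | p.1 ∈ comaximalVertices F L ∧
      p.2 ∈ comaximalVertices F L ∧ p.1 ≠ p.2 ∧ p.1 ⊔ p.2 = ⊤} =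
      (comaximalVertices F L).offDiag ∩ {p | p.1 ⊔ p.2 = ⊤} := by
    ext p
    simp [and_assoc]
  have hnon : ((comaximalVertices F L).offDiag \ {p | p.1 ⊔ p.2 = ⊤}).ncard =
      (planeSubalgebras F L).ncard * ((Nat.card F + 2) * (Nat.card F + 1)) := by
    refine ncard_eq_ncard_mul_of_fiber (f := fun p ↦ p.1 ⊔ p.2) (Set.toFinite _)
      (Set.toFinite _) ?_ ?_
    · exact fun p ⟨⟨hA, hB, hAB⟩, hsup⟩ ↦ (sup_ne_top_iff hL hA hB hAB).1 hsup
    · intro W hW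
      have hfiber : {p ∈ (comaximalVertices F L).offDiag \ {p | p.1 ⊔ p.2 = ⊤} |
          p.1 ⊔ p.2 = W} = {B ∈ comaximalVertices F L | B ≤ W}.offDiag := by
        ext ⟨A, B⟩
        constructor
        · rintro ⟨⟨⟨hA, hB, hAB⟩, _⟩, rfl⟩
          exact ⟨⟨hA, le_sup_left⟩, ⟨hB, le_sup_right⟩, hAB⟩
        · rintro ⟨⟨hA, hAW⟩, ⟨hB, hBW⟩, hAB⟩
          have h := (sup_eq_iff_of_mem_planeSubalgebras hL hA hB hAB hW).2 ⟨hAW, hBW⟩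
          exact ⟨⟨⟨hA, hB, hAB⟩, h.1⟩, h.2⟩
      have hoff := ncard_offDiag_add (Set.toFinite {B ∈ comaximalVertices F L | B ≤ W})
      rw [ncard_comaximalVertices_le hL hW] at hoff
      rw [hfiber]
      linarith
  rw [hadj, ← hnon, Set.ncard_inter_add_ncard_sdiff_eq_ncard, ncard_offDiag_add (Set.toFinite _)]

end DimensionThree

end Comaximal

section SpecialLinear

variable {F L : Type*} [Field F] [LieRing L] [LieAlgebra F L] {b : Basis (Fin 3) F L}

theorem lie_eq_of_isSl2Triple (ht : IsSl2Triple (b 2) (b 0) (b 1)) (u v : L) :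
    ⁅u, v⁆ = (2 * (b.coord 2 u * b.coord 0 v - b.coord 0 u * b.coord 2 v)) • b 0 +
      (2 * (b.coord 1 u * b.coord 2 v - b.coord 2 u * b.coord 1 v)) • b 1 +
      (b.coord 0 u * b.coord 1 v - b.coord 1 u * b.coord 0 v) • b 2 := by
  have hhx : ⁅b 2, b 0⁆ = (2 : F) • b 0 := ht.lie_h_e_smul F
  have hhy : ⁅b 2, b 1⁆ = -((2 : F) • b 1) := ht.lie_lie_smul_f F
  have hxh : ⁅b 0, b 2⁆ = -((2 : F) • b 0) := by rw [← lie_skew, hhx]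
  have hyh : ⁅b 1, b 2⁆ = (2 : F) • b 1 := by rw [← lie_skew, hhy, neg_neg]
  have hyx : ⁅b 1, b 0⁆ = -b 2 := by rw [← lie_skew, ht.lie_e_f]
  conv_lhs => rw [← b.sum_repr u, ← b.sum_repr v]
  simp only [Fin.sum_univ_three, add_lie, lie_add, smul_lie, lie_smul, lie_self, hhx, hhy, hxh,
    hyh, hyx, ht.lie_e_f, Basis.coord_apply]
  module

theorem apply_lie_of_isSl2Triple (ht : IsSl2Triple (b 2) (b 0) (b 1)) (f : Dual F L) (u v : L) :
    f ⁅u, v⁆ = 2 * (b.coord 2 u * b.coord 0 v - b.coord 0 u * b.coord 2 v) * f (b 0) +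
      2 * (b.coord 1 u * b.coord 2 v - b.coord 2 u * b.coord 1 v) * f (b 1) +
      (b.coord 0 u * b.coord 1 v - b.coord 1 u * b.coord 0 v) * f (b 2) := by
  rw [lie_eq_of_isSl2Triple ht]
  simp only [map_add, map_smul, smul_eq_mul]

/-- The linear form on `sl₂` whose kernel is the stabilizer of a point of the projective line: with
`a • x + b • y + c • h` written as the matrix `[[c, a], [b, -c]]`, a scalar `t` stands for the line
spanned by `(1, t)` and `∞` for the line spanned by `(0, 1)`. -/
noncomputable def borelForm (b : Basis (Fin 3) F L) : OnePoint F → Dual F L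
  | ∞ => b.coord 0
  | OnePoint.some t => b.coord 1 - (2 * t) • b.coord 2 - t ^ 2 • b.coord 0

theorem borelForm_infty_apply (v : L) : borelForm b ∞ v = b.coord 0 v := rfl

theorem borelForm_coe_apply (t : F) (v : L) :
    borelForm b (t : OnePoint F) v = b.coord 1 v - 2 * t * b.coord 2 v - t ^ 2 * b.coord 0 v := rfl

theorem borelForm_infty_basis :
    borelForm b ∞ (b 0) = 1 ∧ borelForm b ∞ (b 1) = 0 ∧ borelForm b ∞ (b 2) = 0 := by
  simp [borelForm_infty_apply]

theorem borelForm_coe_basis (t : F) :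
    borelForm b (t : OnePoint F) (b 0) = -t ^ 2 ∧ borelForm b (t : OnePoint F) (b 1) = 1 ∧
      borelForm b (t : OnePoint F) (b 2) = -(2 * t) := by
  simp [borelForm_coe_apply]

theorem borelForm_ne_zero (i : OnePoint F) : borelForm b i ≠ 0 := by
  intro h
  cases i with
  | infty => exact one_ne_zero (borelForm_infty_basis.1.symm.trans (LinearMap.congr_fun h (b 0)))
  | coe t =>
    exact one_ne_zero ((borelForm_coe_basis t).2.1.symm.trans (LinearMap.congr_fun h (b 1)))

theorem borelForm_lie_eq_zero (ht : IsSl2Triple (b 2) (b 0) (b 1)) {i : OnePoint F} {u v : L}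
    (hu : borelForm b i u = 0) (hv : borelForm b i v = 0) : borelForm b i ⁅u, v⁆ = 0 := by
  rw [apply_lie_of_isSl2Triple ht]
  cases i with
  | infty =>
    obtain ⟨h0, h1, h2⟩ := borelForm_infty_basis (b := b)
    rw [borelForm_infty_apply] at hu hv
    rw [h0, h1, h2, hu, hv]
    ring
  | coe t =>
    obtain ⟨h0, h1, h2⟩ := borelForm_coe_basis (b := b) t
    rw [borelForm_coe_apply] at hu hv
    rw [h0, h1, h2]
    linear_combination (2 * b.coord 2 v + 2 * t * b.coord 0 v) * hu -
      (2 * t * b.coord 0 u + 2 * b.coord 2 u) * hv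

/-- The Borel subalgebra of `sl₂` stabilizing a point of the projective line. -/
noncomputable def borelSubalgebra (ht : IsSl2Triple (b 2) (b 0) (b 1)) (i : OnePoint F) :
    LieSubalgebra F L :=
  { LinearMap.ker (borelForm b i) with
    lie_mem' := borelForm_lie_eq_zero ht }

theorem mem_borelSubalgebra (ht : IsSl2Triple (b 2) (b 0) (b 1)) {i : OnePoint F} {v : L} :
    v ∈ borelSubalgebra ht i ↔ borelForm b i v = 0 := Iff.rfl

theorem borelSubalgebra_mem_planeSubalgebras (ht : IsSl2Triple (b 2) (b 0) (b 1))
    (i : OnePoint F) : borelSubalgebra ht i ∈ planeSubalgebras F L := by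
  have : FiniteDimensional F L := b.finiteDimensional_of_finite
  have h := Dual.finrank_ker_add_one_of_ne_zero (borelForm_ne_zero (b := b) i)
  rw [finrank_eq_card_basis b, Fintype.card_fin] at h
  exact Nat.succ.inj h

theorem borelSubalgebra_injective (ht : IsSl2Triple (b 2) (b 0) (b 1)) (h2 : (2 : F) ≠ 0) :
    Function.Injective (borelSubalgebra ht) := by
  intro i j hij
  have hmem (v : L) : borelForm b i v = 0 ↔ borelForm b j v = 0 := by
    rw [← mem_borelSubalgebra ht, hij, mem_borelSubalgebra ht]
  obtain ⟨-, hinfty, -⟩ := borelForm_infty_basis (b := b)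
  have hcoe (t : F) := (borelForm_coe_basis (b := b) t).2
  cases i with
  | infty =>
    cases j with
    | infty => rfl
    | coe t => exact absurd ((hcoe t).1.symm.trans ((hmem _).1 hinfty)) one_ne_zero
  | coe s =>
    cases j with
    | infty => exact absurd ((hcoe s).1.symm.trans ((hmem _).2 hinfty)) one_ne_zero
    | coe t =>
      have apply_eq (r : F) :
          borelForm b (r : OnePoint F) ((2 * s) • b 1 + b 2) = 2 * (s - r) := by
        rw [map_add, map_smul, (hcoe r).1, (hcoe r).2, smul_eq_mul]
        ring
      have hst : 2 * (s - t) = 0 :=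
        (apply_eq t).symm.trans ((hmem _).1 ((apply_eq s).trans (by ring)))
      rw [sub_eq_zero.1 ((mul_eq_zero.1 hst).resolve_left h2)]

theorem discrim_eq_zero_of_forall_lie (ht : IsSl2Triple (b 2) (b 0) (b 1)) {f : Dual F L}
    (hf : f ≠ 0) (hlie : ∀ u v, f u = 0 → f v = 0 → f ⁅u, v⁆ = 0) :
    f (b 2) ^ 2 + 4 * (f (b 0) * f (b 1)) = 0 := by
  -- The brackets of the elements `f(bⱼ) bᵢ - f(bᵢ) bⱼ` of the kernel of `f` are mapped by `f` to
  -- the products of the values of `f` on the basis with the discriminant.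
  have hker (i j : Fin 3) : f (f (b j) • b i - f (b i) • b j) = 0 := by
    simp only [map_sub, map_smul, smul_eq_mul]
    ring
  have hxy : f ⁅b 0, b 1⁆ = f (b 2) := by rw [ht.lie_e_f]
  have hyx : f ⁅b 1, b 0⁆ = -f (b 2) := by rw [← lie_skew, map_neg, hxy]
  have hhx : f ⁅b 2, b 0⁆ = 2 * f (b 0) := by rw [ht.lie_h_e_smul F, map_smul, smul_eq_mul]
  have hxh : f ⁅b 0, b 2⁆ = -(2 * f (b 0)) := by rw [← lie_skew, map_neg, hhx]
  have hhy : f ⁅b 2, b 1⁆ = -(2 * f (b 1)) := by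
    rw [ht.lie_lie_smul_f F, map_neg, map_smul, smul_eq_mul]
  have hyh : f ⁅b 1, b 2⁆ = 2 * f (b 1) := by rw [← lie_skew, map_neg, hhy, neg_neg]
  have h01 := hlie _ _ (hker 0 1) (hker 0 2)
  have h02 := hlie _ _ (hker 0 1) (hker 1 2)
  have h12 := hlie _ _ (hker 0 2) (hker 1 2)
  simp only [lie_sub, sub_lie, lie_smul, smul_lie, map_sub, map_smul, smul_eq_mul, lie_self,
    map_zero, hxy, hyx, hxh, hyh, hhy] at h01 h02 h12
  by_contra hΔ
  refine hf (b.ext fun i ↦ (mul_eq_zero.1 ?_).resolve_right hΔ)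
  match i with
  | 0 => linear_combination h01
  | 1 => linear_combination h02
  | 2 => linear_combination h12

theorem exists_smul_borelForm_eq (h2 : (2 : F) ≠ 0) {f : Dual F L} (hf : f ≠ 0)
    (hΔ : f (b 2) ^ 2 + 4 * (f (b 0) * f (b 1)) = 0) :
    ∃ i, ∃ c : F, c ≠ 0 ∧ f = c • borelForm b i := by
  by_cases hy : f (b 1) = 0
  · have hh : f (b 2) = 0 := by simpa [hy] using hΔ
    obtain ⟨h0, h1, h2⟩ := borelForm_infty_basis (b := b)
    have heq : f = f (b 0) • borelForm b ∞ := b.ext fun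
      | 0 => by rw [LinearMap.smul_apply, h0, smul_eq_mul, mul_one]
      | 1 => by rw [LinearMap.smul_apply, h1, smul_zero, hy]
      | 2 => by rw [LinearMap.smul_apply, h2, smul_zero, hh]
    exact ⟨∞, f (b 0), fun hx ↦ hf (by rw [heq, hx, zero_smul]), heq⟩
  · obtain ⟨h0, h1, h2⟩ := borelForm_coe_basis (b := b) (-(f (b 2) / (2 * f (b 1))))
    refine ⟨_, f (b 1), hy, b.ext fun
      | 0 => ?_
      | 1 => by rw [LinearMap.smul_apply, h1, smul_eq_mul, mul_one]
      | 2 => ?_⟩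
    · rw [LinearMap.smul_apply, h0, smul_eq_mul]
      field_simp
      linear_combination hΔ
    · rw [LinearMap.smul_apply, h2, smul_eq_mul]
      field_simp

theorem range_borelSubalgebra (ht : IsSl2Triple (b 2) (b 0) (b 1)) (h2 : (2 : F) ≠ 0) :
    Set.range (borelSubalgebra ht) = planeSubalgebras F L := by
  refine (Set.range_subset_iff.2 (borelSubalgebra_mem_planeSubalgebras ht)).antisymm fun W hW ↦ ?_
  have : FiniteDimensional F L := b.finiteDimensional_of_finite
  have hfinrank : finrank F W.toSubmodule + 1 = finrank F L := by
    rw [finrank_eq_card_basis b, Fintype.card_fin]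
    exact congrArg (· + 1) hW
  obtain ⟨f, hf, hfW⟩ := exists_dual_ker_eq hfinrank
  have hmem (v : L) : v ∈ W ↔ f v = 0 := by
    rw [← LieSubalgebra.mem_toSubmodule, ← hfW, LinearMap.mem_ker]
  obtain ⟨i, c, hc, rfl⟩ := exists_smul_borelForm_eq h2 hf <|
    discrim_eq_zero_of_forall_lie ht hf fun u v hu hv ↦
      (hmem _).1 (W.lie_mem ((hmem u).2 hu) ((hmem v).2 hv))
  refine ⟨i, LieSubalgebra.ext _ _ fun v ↦ ?_⟩
  simp [mem_borelSubalgebra, hmem, hc]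

theorem ncard_planeSubalgebras [Finite F] (ht : IsSl2Triple (b 2) (b 0) (b 1))
    (h2 : (2 : F) ≠ 0) : (planeSubalgebras F L).ncard = Nat.card F + 1 := by
  rw [← range_borelSubalgebra ht h2, ← Set.image_univ,
    Set.ncard_image_of_injective _ (borelSubalgebra_injective ht h2), Set.ncard_univ]
  exact Finite.card_option

/-- Minus the determinant of the matrix `[[c, a], [b, -c]]` of `v`: a nonzero `v` is nilpotent,
split or nonsplit according as it is zero, a nonzero square or a nonsquare. -/
noncomputable def sl2Discriminant (b : Basis (Fin 3) F L) (v : L) : F :=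
  b.coord 2 v ^ 2 + b.coord 0 v * b.coord 1 v

/-- The eigenvalue of `v` on the point `i` of the projective line, if `v` stabilizes it. -/
noncomputable def borelEigenvalue (b : Basis (Fin 3) F L) (v : L) : OnePoint F → F
  | ∞ => -b.coord 2 v
  | OnePoint.some t => b.coord 2 v + b.coord 0 v * t

theorem borelEigenvalue_infty (v : L) : borelEigenvalue b v ∞ = -b.coord 2 v := rfl

theorem borelEigenvalue_coe (v : L) (t : F) :
    borelEigenvalue b v (t : OnePoint F) = b.coord 2 v + b.coord 0 v * t := rfl

theorem borelEigenvalue_sq {v : L} {i : OnePoint F} (hi : borelForm b i v = 0) :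
    borelEigenvalue b v i ^ 2 = sl2Discriminant b v := by
  rw [sl2Discriminant]
  cases i with
  | infty =>
    rw [borelForm_infty_apply] at hi
    rw [borelEigenvalue_infty, hi]
    ring
  | coe t =>
    rw [borelForm_coe_apply] at hi
    rw [borelEigenvalue_coe]
    linear_combination (-b.coord 0 v) * hi

theorem coord_two_ne_zero_of_borelForm_coe {v : L} (hv : v ≠ 0) (ha : b.coord 0 v = 0) {t : F}
    (ht : borelForm b (t : OnePoint F) v = 0) : b.coord 2 v ≠ 0 := by
  intro hc
  have hb : b.coord 1 v = 0 := by
    simpa only [borelForm_coe_apply, ha, hc, mul_zero, sub_zero] using ht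
  refine hv (b.ext_elem fun i ↦ ?_)
  rw [map_zero, Finsupp.zero_apply]
  match i with
  | 0 => exact ha
  | 1 => exact hb
  | 2 => exact hc

theorem injOn_borelEigenvalue (h2 : (2 : F) ≠ 0) {v : L} (hv : v ≠ 0) :
    Set.InjOn (borelEigenvalue b v) {i | borelForm b i v = 0} := by
  have infty_ne_coe (t : F) (hinfty : borelForm b ∞ v = 0)
      (ht : borelForm b (t : OnePoint F) v = 0) :
      borelEigenvalue b v ∞ ≠ borelEigenvalue b v (t : OnePoint F) := by
    intro h
    rw [borelForm_infty_apply] at hinfty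
    rw [borelEigenvalue_infty, borelEigenvalue_coe, hinfty] at h
    have hc : 2 * b.coord 2 v = 0 := by linear_combination -h
    exact mul_ne_zero h2 (coord_two_ne_zero_of_borelForm_coe hv hinfty ht) hc
  intro i hi j hj hij
  cases i with
  | infty =>
    cases j with
    | infty => rfl
    | coe t => exact absurd hij (infty_ne_coe t hi hj)
  | coe s =>
    cases j with
    | infty => exact absurd hij.symm (infty_ne_coe s hj hi)
    | coe t =>
      rw [borelEigenvalue_coe, borelEigenvalue_coe, add_right_inj] at hij
      by_cases ha : b.coord 0 v = 0
      · have hc := mul_ne_zero h2 (coord_two_ne_zero_of_borelForm_coe hv ha hi)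
        rw [Set.mem_ofPred_eq, borelForm_coe_apply, ha] at hi hj
        rw [mul_left_cancel₀ hc (by linear_combination hj - hi : 2 * b.coord 2 v * s = _ * t)]
      · rw [mul_left_cancel₀ ha hij]

theorem exists_borelEigenvalue_eq (h2 : (2 : F) ≠ 0) {v : L} {s : F}
    (hs : s ^ 2 = sl2Discriminant b v) : ∃ i, borelForm b i v = 0 ∧ borelEigenvalue b v i = s := by
  rw [sl2Discriminant] at hs
  by_cases ha : b.coord 0 v = 0
  · by_cases hsc : s = -b.coord 2 v
    · exact ⟨∞, ha, hsc.symm⟩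
    · rw [ha, zero_mul, add_zero, sq_eq_sq_iff_eq_or_eq_neg, or_iff_left hsc] at hs
      have hc : b.coord 2 v ≠ 0 := fun hc ↦ hsc (by rw [hs, hc, neg_zero])
      refine ⟨((b.coord 1 v / (2 * b.coord 2 v) : F) : OnePoint F), ?_, ?_⟩
      · rw [borelForm_coe_apply, ha]
        field_simp
        ring
      · rw [borelEigenvalue_coe, ha, zero_mul, add_zero, hs]
  · refine ⟨(((s - b.coord 2 v) / b.coord 0 v : F) : OnePoint F), ?_, ?_⟩
    · rw [borelForm_coe_apply]
      field_simp
      linear_combination -hs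
    · rw [borelEigenvalue_coe, mul_div_cancel₀ _ ha, add_sub_cancel]

theorem bijOn_borelEigenvalue (h2 : (2 : F) ≠ 0) {v : L} (hv : v ≠ 0) :
    Set.BijOn (borelEigenvalue b v) {i | borelForm b i v = 0}
      {s | s ^ 2 = sl2Discriminant b v} :=
  ⟨fun _ ↦ borelEigenvalue_sq, injOn_borelEigenvalue h2 hv,
    fun _ ↦ exists_borelEigenvalue_eq h2⟩

theorem le_iff_mem_of_finrank_eq_one {A W : LieSubalgebra F L} (hA : finrank F A = 1) {v : L}
    (hv : v ≠ 0) (hvA : v ∈ A) : A ≤ W ↔ v ∈ W := by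
  refine ⟨fun h ↦ h hvA, fun hvW u hu ↦ ?_⟩
  have hv' : (⟨v, hvA⟩ : A) ≠ 0 := fun h ↦ hv (congrArg Subtype.val h)
  obtain ⟨c, hc⟩ := (finrank_eq_one_iff_of_nonzero' _ hv').1 hA ⟨u, hu⟩
  rw [show u = c • v from congrArg Subtype.val hc.symm]
  exact W.smul_mem c hvW

theorem ncard_planeSubalgebras_ge (ht : IsSl2Triple (b 2) (b 0) (b 1)) (h2 : (2 : F) ≠ 0)
    {A : LieSubalgebra F L} (hA : finrank F A = 1) {v : L} (hv : v ≠ 0) (hvA : v ∈ A) :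
    {W ∈ planeSubalgebras F L | A ≤ W}.ncard = {s | s ^ 2 = sl2Discriminant b v}.ncard := by
  have himage : {W ∈ planeSubalgebras F L | A ≤ W} =
      borelSubalgebra ht '' {i | borelForm b i v = 0} := by
    ext W
    rw [← range_borelSubalgebra ht h2]
    constructor
    · rintro ⟨⟨i, rfl⟩, hi⟩
      exact ⟨i, hi hvA, rfl⟩
    · rintro ⟨i, hi, rfl⟩
      exact ⟨⟨i, rfl⟩, (le_iff_mem_of_finrank_eq_one hA hv hvA).2 hi⟩
  rw [himage, Set.ncard_image_of_injective _ (borelSubalgebra_injective ht h2),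
    (bijOn_borelEigenvalue h2 hv).ncard_eq]

theorem ncard_comaximalVertices_of_isSl2Triple [Finite F] (ht : IsSl2Triple (b 2) (b 0) (b 1))
    (h2 : (2 : F) ≠ 0) : (comaximalVertices F L).ncard = (Nat.card F + 1) ^ 2 + 1 := by
  have : FiniteDimensional F L := b.finiteDimensional_of_finite
  rw [ncard_comaximalVertices (finrank_eq_card_basis b), ncard_planeSubalgebras ht h2]
  ring

theorem comaximalDegree_of_finrank_eq_two [Finite F] (ht : IsSl2Triple (b 2) (b 0) (b 1))
    (h2 : (2 : F) ≠ 0) {W : LieSubalgebra F L} (hW : finrank F W = 2) :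
    comaximalDegree F L W = Nat.card F ^ 2 + Nat.card F := by
  have : FiniteDimensional F L := b.finiteDimensional_of_finite
  have h := comaximalDegree_add_of_mem_planeSubalgebras (finrank_eq_card_basis b) hW
  rw [ncard_comaximalVertices_of_isSl2Triple ht h2] at h
  linarith

theorem comaximalDegree_of_finrank_eq_one [Fintype F] [DecidableEq F]
    (ht : IsSl2Triple (b 2) (b 0) (b 1)) (hF : ringChar F ≠ 2) {A : LieSubalgebra F L}
    (hA : finrank F A = 1) {v : L} (hv : v ≠ 0) (hvA : v ∈ A) :
    (comaximalDegree F L A : ℤ) =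
      (Nat.card F + 1) * (Nat.card F - quadraticChar F (sl2Discriminant b v)) := by
  have : FiniteDimensional F L := b.finiteDimensional_of_finite
  have h2 := Ring.two_ne_zero hF
  have hL : finrank F L = 3 := finrank_eq_card_basis b
  have h := comaximalDegree_add hL ((mem_comaximalVertices_iff hL).2 (Or.inl hA))
  rw [ncard_planeSubalgebras_ge ht h2 hA hv hvA, ncard_comaximalVertices_of_isSl2Triple ht h2] at h
  zify at h
  rw [ncard_sqrts hF] at h
  linear_combination h

theorem ncard_comaximalPairs_of_isSl2Triple [Finite F] (ht : IsSl2Triple (b 2) (b 0) (b 1))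
    (h2 : (2 : F) ≠ 0) :
    {p : LieSubalgebra F L × LieSubalgebra F L | p.1 ∈ comaximalVertices F L ∧
      p.2 ∈ comaximalVertices F L ∧ p.1 ≠ p.2 ∧ p.1 ⊔ p.2 = ⊤}.ncard =
        Nat.card F * (Nat.card F + 1) ^ 3 := by
  have : FiniteDimensional F L := b.finiteDimensional_of_finite
  have h := ncard_comaximalPairs_add (F := F) (L := L) (finrank_eq_card_basis b)
  rw [ncard_comaximalVertices_of_isSl2Triple ht h2, ncard_planeSubalgebras ht h2] at h
  linarith

theorem comaximalDegree_of_combination_mem [Fintype F] [DecidableEq F]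
    (ht : IsSl2Triple (b 2) (b 0) (b 1)) (hF : ringChar F ≠ 2) {A : LieSubalgebra F L}
    (hA : finrank F A = 1) {r s t : F} (h0 : ¬(r = 0 ∧ s = 0 ∧ t = 0))
    (hmem : r • b 0 + s • b 1 + t • b 2 ∈ A) :
    (comaximalDegree F L A : ℤ) =
      (Nat.card F + 1) * (Nat.card F - quadraticChar F (t ^ 2 + r * s)) := by
  have hr : b.coord 0 (r • b 0 + s • b 1 + t • b 2) = r := by simp
  have hs : b.coord 1 (r • b 0 + s • b 1 + t • b 2) = s := by simp
  have ht' : b.coord 2 (r • b 0 + s • b 1 + t • b 2) = t := by simp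
  have hv : r • b 0 + s • b 1 + t • b 2 ≠ 0 := by
    intro hv
    rw [hv, map_zero] at hr hs ht'
    exact h0 ⟨hr.symm, hs.symm, ht'.symm⟩
  rw [comaximalDegree_of_finrank_eq_one ht hF hA hv hmem, sl2Discriminant, hr, hs, ht']

theorem exists_basis_isSl2Triple {x y h : L} (hspan : Submodule.span F {x, y, h} = ⊤)
    (hdim : finrank F L = 3) (hhx : ⁅h, x⁆ = (2 : F) • x) (hhy : ⁅h, y⁆ = -(2 : F) • y)
    (hxy : ⁅x, y⁆ = h) :
    ∃ b : Basis (Fin 3) F L, b 0 = x ∧ b 1 = y ∧ b 2 = h ∧ IsSl2Triple (b 2) (b 0) (b 1) := by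
  have hrange : Set.range ![x, y, h] = {x, y, h} := by
    rw [Matrix.range_cons, Matrix.range_cons_cons_empty, Set.singleton_union]
  let b := basisOfTopLeSpanOfCardEqFinrank ![x, y, h] (by rw [hrange, hspan])
    (by rw [Fintype.card_fin, hdim])
  have hb : ⇑b = ![x, y, h] := coe_basisOfTopLeSpanOfCardEqFinrank _ _ _
  refine ⟨b, by rw [hb]; rfl, by rw [hb]; rfl, by rw [hb]; rfl, b.ne_zero 2, ?_, ?_, ?_⟩
  all_goals rw [hb]
  · exact hxy
  · exact hhx.trans ((two_smul F x).trans (two_nsmul x).symm)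
  · exact hhy.trans (by rw [neg_smul, two_smul, two_nsmul]; rfl)

end SpecialLinear

/-- In the comaximal graph of `sl₂(F_q)` (`q` odd, standard basis `x, y, h`):
Borel subalgebras and nilpotent lines have degree `q² + q`, split semisimple
lines have degree `q² − 1`, nonsplit semisimple lines have degree `(q+1)²`;
the graph has `(q+1)² + 1` vertices and `q(q+1)³/2` edges (i.e. `q(q+1)³`
ordered adjacent pairs). A line type is read off from the discriminant
`Δ(a•x + b•y + c•h) = c² + ab` of a spanning vector. -/
theorem sl2_comaximal_degrees
    (F : Type*) [Field F] [Fintype F] (q : ℕ) (hq : Fintype.card F = q)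
    (hodd : Odd q)
    (L : Type*) [LieRing L] [LieAlgebra F L]
    (x y h : L) (hspan : Submodule.span F {x, y, h} = ⊤)
    (hdim : finrank F L = 3)
    (hhx : ⁅h, x⁆ = (2 : F) • x) (hhy : ⁅h, y⁆ = -(2 : F) • y)
    (hxy : ⁅x, y⁆ = h) :
    (∀ B : LieSubalgebra F L, finrank F B = 2 →
        comaximalDegree F L B = q ^ 2 + q) ∧
    (∀ A : LieSubalgebra F L, finrank F A = 1 →
        (∃ a b c : F, ¬(a = 0 ∧ b = 0 ∧ c = 0) ∧ a • x + b • y + c • h ∈ A ∧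
            c ^ 2 + a * b = 0) →
        comaximalDegree F L A = q ^ 2 + q) ∧
    (∀ A : LieSubalgebra F L, finrank F A = 1 →
        (∃ a b c : F, ¬(a = 0 ∧ b = 0 ∧ c = 0) ∧ a • x + b • y + c • h ∈ A ∧
            c ^ 2 + a * b ≠ 0 ∧ IsSquare (c ^ 2 + a * b)) →
        comaximalDegree F L A = q ^ 2 - 1) ∧
    (∀ A : LieSubalgebra F L, finrank F A = 1 →
        (∃ a b c : F, ¬(a = 0 ∧ b = 0 ∧ c = 0) ∧ a • x + b • y + c • h ∈ A ∧
            ¬ IsSquare (c ^ 2 + a * b)) →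
        comaximalDegree F L A = (q + 1) ^ 2) ∧
    Nat.card {A : LieSubalgebra F L // A ≠ ⊥ ∧ A ≠ ⊤} = (q + 1) ^ 2 + 1 ∧
    Nat.card {p : LieSubalgebra F L × LieSubalgebra F L //
        (p.1 ≠ ⊥ ∧ p.1 ≠ ⊤) ∧ (p.2 ≠ ⊥ ∧ p.2 ≠ ⊤) ∧ p.1 ≠ p.2 ∧
          p.1 ⊔ p.2 = ⊤} = q * (q + 1) ^ 3 := by
  classical
  have hF : ringChar F ≠ 2 := fun hchar ↦ by
    have := FiniteField.even_card_iff_char_two.1 hchar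
    rw [Nat.odd_iff] at hodd
    omega
  have h2 : (2 : F) ≠ 0 := Ring.two_ne_zero hF
  obtain ⟨b, rfl, rfl, rfl, ht⟩ := exists_basis_isSl2Triple hspan hdim hhx hhy hxy
  obtain rfl : Nat.card F = q := Nat.card_eq_fintype_card.trans hq
  refine ⟨fun B hB ↦ comaximalDegree_of_finrank_eq_two ht h2 hB, ?_, ?_, ?_,
    ncard_comaximalVertices_of_isSl2Triple ht h2, ncard_comaximalPairs_of_isSl2Triple ht h2⟩
  · rintro A hA ⟨r, s, t, h0, hmem, hΔ⟩
    have hdeg := comaximalDegree_of_combination_mem ht hF hA h0 hmem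
    rw [hΔ, quadraticChar_zero] at hdeg
    zify
    linear_combination hdeg
  · rintro A hA ⟨r, s, t, h0, hmem, hΔ, hsq⟩
    have hdeg := comaximalDegree_of_combination_mem ht hF hA h0 hmem
    rw [(quadraticChar_one_iff_isSquare hΔ).2 hsq] at hdeg
    refine Nat.eq_sub_of_add_eq ?_
    zify
    linear_combination hdeg
  · rintro A hA ⟨r, s, t, h0, hmem, hsq⟩
    have hdeg := comaximalDegree_of_combination_mem ht hF hA h0 hmem
    rw [quadraticChar_neg_one_iff_not_isSquare.2 hsq] at hdeg
    zify
    linear_combination hdeg
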